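/- arXiv:math/0307170 — 5 statements merged into one kernel-verified Lean document; each statement's English description precedes it below -/
import Mathlib

section
/- Let n ≥ 1, let I be a finite index set, and let t, q : I → ℝⁿ be families of vectors such that the family {t_i : i ∈ I} spans ℝⁿ and the family {q_i : i ∈ I} spans ℝⁿ. Then the following are equivalent: (i) q_i · t_j = t_i · q_j for all pairs i, j ∈ I; (ii) there exists a unique symmetric real n×n matrix D such that q_i = D t_i for all i ∈ I, and this matrix D is invertible. -/
/-!
Let `A`, `B` be the matrices whose rows are the `t i`, respectively the `q i`. Since the rows of `A`
span, `A` has a left inverse `R`; likewise `S * B = 1` for some `S`. The symmetry relations say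
`B * Aᵀ = A * Bᵀ`, and `q i = D t i` for all `i` says `B = A * Dᵀ`. A symmetric solution is therefore
necessarily `D = R * B`. Given the symmetry relations, `R * B = R * (B * Aᵀ) * Rᵀ` is symmetric, it
satisfies `A * (R * B)ᵀ = A * Bᵀ * Rᵀ = B * Aᵀ * Rᵀ = B`, and it is invertible because
`(S * A) * (R * B)ᵀ = S * B = 1`. The converse is the self-adjointness of a symmetric matrix.
-/

open Matrix

/-- A matrix whose rows span has a left inverse. -/
theorem exists_left_inverse_of_span_rows {n : ℕ} {I : Type*} [Fintype I] (t : I → (Fin n → ℝ))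
    (ht : Submodule.span ℝ (Set.range t) = ⊤) :
    ∃ R : Matrix (Fin n) I ℝ, R * Matrix.of t = 1 := by
  have h : ∀ k : Fin n, ∃ c : I → ℝ, ∑ i, c i • t i = (1 : Matrix (Fin n) (Fin n) ℝ) k := fun k =>
    (Submodule.mem_span_range_iff_exists_fun ℝ).1 (ht ▸ Submodule.mem_top)
  choose c hc using h
  refine ⟨Matrix.of c, ?_⟩
  ext k l
  rw [← hc k]
  simp [Matrix.mul_apply]

theorem forall_eq_mulVec_iff {n : ℕ} {I : Type*} (t q : I → (Fin n → ℝ))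
    (D : Matrix (Fin n) (Fin n) ℝ) :
    (∀ i, q i = D *ᵥ t i) ↔ Matrix.of q = Matrix.of t * Dᵀ := by
  constructor
  · intro h
    ext i k
    simp [h i, Matrix.mul_apply, Matrix.mulVec, dotProduct, mul_comm]
  · intro h i
    ext k
    have := congrFun (congrFun h i) k
    simpa [Matrix.mul_apply, Matrix.mulVec, dotProduct, mul_comm] using this

/-- Lemma `qt` of Deza–Grishukhin: for families of vectors `t i`, `q i` in `ℝⁿ`
each spanning `ℝⁿ`, the symmetry relations `q i ⬝ᵥ t j = t i ⬝ᵥ q j` hold for all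
pairs iff there is a unique symmetric matrix `D` with `q i = D.mulVec (t i)` for
all `i`, and this matrix is invertible. -/
theorem stmt_0 (n : ℕ) (hn : 1 ≤ n) (I : Type*) [Fintype I]
    (t q : I → (Fin n → ℝ))
    (ht : Submodule.span ℝ (Set.range t) = ⊤)
    (hq : Submodule.span ℝ (Set.range q) = ⊤) :
    (∀ i j : I, q i ⬝ᵥ t j = t i ⬝ᵥ q j) ↔
      (∃! D : Matrix (Fin n) (Fin n) ℝ,
        D.IsSymm ∧ (∀ i : I, q i = D.mulVec (t i)) ∧ IsUnit D) := by
  constructor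
  · intro h
    obtain ⟨R, hR⟩ := exists_left_inverse_of_span_rows t ht
    obtain ⟨S, hS⟩ := exists_left_inverse_of_span_rows q hq
    have hsymm : Matrix.of q * (Matrix.of t)ᵀ = Matrix.of t * (Matrix.of q)ᵀ := by
      ext i j
      simpa [Matrix.mul_apply, dotProduct] using h i j
    have hR' : (Matrix.of t)ᵀ * Rᵀ = 1 := by
      rw [← Matrix.transpose_mul, hR, Matrix.transpose_one]
    have hB : Matrix.of q = Matrix.of t * (R * Matrix.of q)ᵀ := by
      rw [Matrix.transpose_mul, ← Matrix.mul_assoc, ← hsymm, Matrix.mul_assoc, hR', Matrix.mul_one]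
    have hD : (R * Matrix.of q).IsSymm := by
      -- multiplying `hB` by `R` on the left gives `R * B = (R * B)ᵀ`
      have := congrArg (R * ·) hB
      simp only [← Matrix.mul_assoc, hR, Matrix.one_mul] at this
      exact this.symm
    refine ⟨R * Matrix.of q, ⟨hD, (forall_eq_mulVec_iff t q _).2 hB, ?_⟩, ?_⟩
    · rw [hD.eq] at hB
      have hinv : (S * Matrix.of t) * (R * Matrix.of q) = 1 := by
        rw [Matrix.mul_assoc, ← hB, hS]
      exact IsUnit.of_mul_eq_one_right _ hinv
    · rintro D ⟨hDs, hDq, -⟩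
      rw [(forall_eq_mulVec_iff t q D).1 hDq, ← Matrix.mul_assoc, hR, Matrix.one_mul, hDs.eq]
  · rintro ⟨D, ⟨hDs, hDq, -⟩, -⟩ i j
    rw [hDq i, hDq j, Matrix.dotProduct_mulVec, ← Matrix.mulVec_transpose, hDs.eq]
end

section
/- Let t_i, t_j, t_k, q_i, q_j, q_k, v be vectors in ℝⁿ satisfying t_i = t_j + t_k, q_i = q_j + q_k, q_i · v = ½ q_i · t_i, q_j · v = ½ q_j · t_j, and q_k · (t_i − v) = ½ q_k · t_k. Then q_i · t_j = q_j · t_i, q_i · t_k = q_k · t_i, and q_j · t_k = q_k · t_j. -/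
open Matrix

/-- Case 1) of Proposition `belt`: for a 3-belt with `tᵢ = tⱼ + tₖ` and canonical
facet vectors `qᵢ = qⱼ + qₖ`, the vertex conditions at `v` and `vˢ = tᵢ - v` imply
the symmetry relations `qᵢ·tⱼ = qⱼ·tᵢ`, `qᵢ·tₖ = qₖ·tᵢ`, `qⱼ·tₖ = qₖ·tⱼ`. -/
theorem stmt_4 (n : ℕ) (ti tj tk qi qj qk v : Fin n → ℝ)
    (ht : ti = tj + tk) (hq : qi = qj + qk)
    (hvi : qi ⬝ᵥ v = (1/2) * (qi ⬝ᵥ ti))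
    (hvj : qj ⬝ᵥ v = (1/2) * (qj ⬝ᵥ tj))
    (hvk : qk ⬝ᵥ (ti - v) = (1/2) * (qk ⬝ᵥ tk)) :
    qi ⬝ᵥ tj = qj ⬝ᵥ ti ∧ qi ⬝ᵥ tk = qk ⬝ᵥ ti ∧ qj ⬝ᵥ tk = qk ⬝ᵥ tj := by
  subst ht hq
  simp only [add_dotProduct, dotProduct_add, dotProduct_sub] at *
  -- Evaluating both sides of `qi ⬝ᵥ v = qj ⬝ᵥ v + qk ⬝ᵥ v` by the hypotheses eliminates `v`
  -- and leaves `qj ⬝ᵥ tk = qk ⬝ᵥ tj`; the other two relations differ from it by a common term.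
  refine ⟨?_, ?_, ?_⟩ <;> linarith
end

section
/- Let P₁, P′, P₂ be finite lists of pairs of vectors in ℝⁿ with t(P′) = −t(P₁), and let t⁰ ∈ ℝⁿ. Let −P′ denote the reversed list P′ with both entries of each pair negated. Then φ(t⁰, P₁ ++ P₂) = φ(t⁰, P₁ ++ P′) + φ(t⁰, (−P′) ++ P₂). (Interpretation: if the circuits C₁ = P₁ + P′ and C₂ = −P′ + P₂ share the path P′, then φ(t⁰, C₁ ⊕ C₂) = φ(t⁰, C₁) + φ(t⁰, C₂), where C₁ ⊕ C₂ = P₁ + P₂ is their sum modulo 2.) -/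
/-! The function `phi` is additive along concatenation, where the second path starts at the
endpoint of the first (`phi_append`), and changes sign when a path is traversed backwards
(`phi_negRev`). Since `P'` runs from `t0 + tSum P1` back to `t0`, its contribution to
`phi t0 (P1 ++ P')` cancels against that of `negRev P'`, after which `P2` starts at
`t0 + tSum P1` on both sides. -/

open Matrix

/-- `tSum P = Σ_k t_k`, the sum of the first components (lattice vectors) of a path. -/
def tSum {n : ℕ} (P : List ((Fin n → ℝ) × (Fin n → ℝ))) : Fin n → ℝ :=
  (P.map Prod.fst).sum

/-- `qSum P = Σ_k q_k`, the sum of the second components (facet vectors) of a path. -/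
def qSum {n : ℕ} (P : List ((Fin n → ℝ) × (Fin n → ℝ))) : Fin n → ℝ :=
  (P.map Prod.snd).sum

/-- `φ(t⁰, P) = Σ_k q_k · (t⁰ + Σ_{r<k} t_r + ½ t_k)`, for a path
`P = ((t₁,q₁),…,(t_s,q_s))` of pairs of vectors in `ℝⁿ`. -/
noncomputable def phi {n : ℕ} (t0 : Fin n → ℝ) (P : List ((Fin n → ℝ) × (Fin n → ℝ))) : ℝ :=
  ∑ k : Fin P.length,
    (P.get k).2 ⬝ᵥ (t0 +
      (∑ r ∈ Finset.univ.filter (fun r : Fin P.length => r < k), (P.get r).1) +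
      (1/2 : ℝ) • (P.get k).1)

/-- `negRev P` is the path opposite to `P`: the reversed list with both entries of
each pair negated. -/
def negRev {n : ℕ} (P : List ((Fin n → ℝ) × (Fin n → ℝ))) :
    List ((Fin n → ℝ) × (Fin n → ℝ)) :=
  (P.map fun p => (-p.1, -p.2)).reverse

lemma phi_nil {n : ℕ} (t0 : Fin n → ℝ) : phi t0 [] = 0 := by
  simp [phi]

/-- Recursive form of `phi`: the first step is peeled off and moves the starting point. -/
lemma phi_cons {n : ℕ} (t0 : Fin n → ℝ) (p : (Fin n → ℝ) × (Fin n → ℝ))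
    (P : List ((Fin n → ℝ) × (Fin n → ℝ))) :
    phi t0 (p :: P) = p.2 ⬝ᵥ (t0 + (1/2 : ℝ) • p.1) + phi (t0 + p.1) P := by
  unfold phi
  simp only [Finset.sum_filter]
  -- `erw` is needed to see `(p :: P).length` as `P.length + 1`.
  erw [Fin.sum_univ_succ]
  congr 1
  · simp
  · refine Finset.sum_congr rfl fun k _ => ?_
    erw [Fin.sum_univ_succ]
    simp [add_assoc]

lemma phi_append {n : ℕ} (t0 : Fin n → ℝ) (P Q : List ((Fin n → ℝ) × (Fin n → ℝ))) :
    phi t0 (P ++ Q) = phi t0 P + phi (t0 + tSum P) Q := by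
  induction P generalizing t0 with
  | nil => simp [phi_nil, tSum]
  | cons p P ih =>
    have hs : t0 + tSum (p :: P) = t0 + p.1 + tSum P := by simp [tSum, add_assoc]
    rw [List.cons_append, phi_cons, phi_cons, ih, hs]
    ring

lemma negRev_cons {n : ℕ} (p : (Fin n → ℝ) × (Fin n → ℝ))
    (P : List ((Fin n → ℝ) × (Fin n → ℝ))) :
    negRev (p :: P) = negRev P ++ [(-p.1, -p.2)] := by
  simp [negRev]

lemma tSum_negRev {n : ℕ} (P : List ((Fin n → ℝ) × (Fin n → ℝ))) :
    tSum (negRev P) = -tSum P := by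
  induction P with
  | nil => simp [tSum, negRev]
  | cons p P ih =>
    rw [negRev_cons]
    simp only [tSum, List.map_append, List.sum_append, List.map_cons, List.sum_cons,
      List.map_nil, List.sum_nil] at ih ⊢
    rw [ih]
    abel

/-- Traversing a path backwards, from its endpoint, negates `phi`: each step has the same
midpoint in both directions, while its facet vector changes sign. -/
lemma phi_negRev {n : ℕ} (t0 : Fin n → ℝ) (P : List ((Fin n → ℝ) × (Fin n → ℝ))) :
    phi (t0 + tSum P) (negRev P) = -phi t0 P := by
  induction P generalizing t0 with
  | nil => simp [phi_nil, negRev]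
  | cons p P ih =>
    have hs : t0 + tSum (p :: P) = t0 + p.1 + tSum P := by simp [tSum, add_assoc]
    have hm : t0 + p.1 + tSum P + -tSum P + (1/2 : ℝ) • -p.1 = t0 + (1/2 : ℝ) • p.1 := by
      module
    rw [negRev_cons, phi_append, hs, ih, tSum_negRev, phi_cons, phi_cons, phi_nil, hm,
      neg_dotProduct]
    ring

/-- Lemma `C` of Deza–Grishukhin: if the circuits `C₁ = P₁ ++ P′` and
`C₂ = (-P′) ++ P₂` share the path `P′` (so `t(P′) = -t(P₁)`), then
`φ(t⁰, C₁ ⊕ C₂) = φ(t⁰, C₁) + φ(t⁰, C₂)` where `C₁ ⊕ C₂ = P₁ ++ P₂`. -/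
theorem stmt_8 (n : ℕ) (t0 : Fin n → ℝ)
    (P1 P' P2 : List ((Fin n → ℝ) × (Fin n → ℝ)))
    (h : tSum P' = -tSum P1) :
    phi t0 (P1 ++ P2) = phi t0 (P1 ++ P') + phi t0 (negRev P' ++ P2) := by
  have hend : t0 + tSum P1 + tSum P' = t0 := by rw [h, add_neg_cancel_right]
  have hstart : t0 + -tSum P' = t0 + tSum P1 := by rw [h, neg_neg]
  have hrev := phi_negRev (t0 + tSum P1) P'
  rw [hend] at hrev
  rw [phi_append, phi_append, phi_append, tSum_negRev, hstart, hrev]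
  ring
end

section
/- Let I be a finite index set and let t, q : I → ℝⁿ be families of vectors such that {t_i : i ∈ I} spans ℝⁿ and q_i · t_j = q_j · t_i for all i, j ∈ I. Let P and P′ be finite lists of pairs of vectors each of whose entries equals (t_i, q_i) or (−t_i, −q_i) for some i ∈ I. If t(P) = t(P′), then q(P) = q(P′). In particular, t(P) = 0 implies q(P) = 0. -/
/-!
The symmetry `q i · t j = q j · t i` is stable under sign changes and sums, so every path `P`
satisfies `q(P) · t j = q j · t(P)` for all `j` (`qSum_dotProduct`). The right-hand side depends
on `P` only through `t(P)`, and since the `t j` span `ℝⁿ`, the numbers `q(P) · t j` determine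
`q(P)`. The second claim is the first one for the empty path.
-/

open Matrix

theorem qSum_dotProduct {n : ℕ} {I : Type*} {t q : I → (Fin n → ℝ)}
    (hsym : ∀ i j : I, q i ⬝ᵥ t j = q j ⬝ᵥ t i)
    (P : List ((Fin n → ℝ) × (Fin n → ℝ)))
    (hP : ∀ p ∈ P, ∃ i : I, p = (t i, q i) ∨ p = (-t i, -q i)) (j : I) :
    qSum P ⬝ᵥ t j = q j ⬝ᵥ tSum P := by
  induction P with
  | nil => simp [qSum, tSum]
  | cons p P ih =>
    have ih' := ih fun p' hp' => hP p' (List.mem_cons_of_mem _ hp')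
    have hp : p.2 ⬝ᵥ t j = q j ⬝ᵥ p.1 := by
      obtain ⟨i, rfl | rfl⟩ := hP p List.mem_cons_self
      · exact hsym i j
      · simp [hsym i j]
    simp only [qSum, tSum, List.map_cons, List.sum_cons, add_dotProduct, dotProduct_add] at ih' ⊢
    rw [hp, ih']

theorem eq_of_dotProduct_eq_of_span_eq_top {n : ℕ} {I : Type*} {t : I → (Fin n → ℝ)}
    (ht : Submodule.span ℝ (Set.range t) = ⊤) {v w : Fin n → ℝ}
    (h : ∀ j, v ⬝ᵥ t j = w ⬝ᵥ t j) : v = w := by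
  refine dotProduct_eq v w fun u => ?_
  have hu : u ∈ Submodule.span ℝ (Set.range t) := ht ▸ Submodule.mem_top
  induction hu using Submodule.span_induction with
  | mem x hx => obtain ⟨j, rfl⟩ := hx; exact h j
  | zero => simp
  | add x y _ _ hx hy => rw [dotProduct_add, dotProduct_add, hx, hy]
  | smul a x _ hx => rw [dotProduct_smul, dotProduct_smul, hx]

/-- If the `t i` span `ℝⁿ` and `q i · t j = q j · t i` for all `i, j`, then for any
two paths `P, P′` with entries of the form `±(t i, q i)`, the equality
`t(P) = t(P′)` implies `q(P) = q(P′)`; in particular `t(P) = 0` implies `q(P) = 0`. -/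
theorem stmt_12 (n : ℕ) (I : Type*) [Fintype I]
    (t q : I → (Fin n → ℝ))
    (ht : Submodule.span ℝ (Set.range t) = ⊤)
    (hsym : ∀ i j : I, q i ⬝ᵥ t j = q j ⬝ᵥ t i)
    (P P' : List ((Fin n → ℝ) × (Fin n → ℝ)))
    (hP : ∀ p ∈ P, ∃ i : I, p = (t i, q i) ∨ p = (-t i, -q i))
    (hP' : ∀ p ∈ P', ∃ i : I, p = (t i, q i) ∨ p = (-t i, -q i)) :
    (tSum P = tSum P' → qSum P = qSum P') ∧ (tSum P = 0 → qSum P = 0) := by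
  have key : ∀ R : List ((Fin n → ℝ) × (Fin n → ℝ)),
      (∀ p ∈ R, ∃ i : I, p = (t i, q i) ∨ p = (-t i, -q i)) →
      tSum P = tSum R → qSum P = qSum R := fun R hR h =>
    eq_of_dotProduct_eq_of_span_eq_top ht fun j => by
      rw [qSum_dotProduct hsym P hP, qSum_dotProduct hsym R hR, h]
  exact ⟨key P' hP', key [] (by simp)⟩
end

section
/- Let n ≥ 1, let I be a finite index set, and let t, q : I → ℝⁿ be families of vectors such that {t_i : i ∈ I} spans ℝⁿ. If q_i · t_j = t_i · q_j for all i, j ∈ I, then the unique symmetric matrix D with q_i = D t_i for all i ∈ I is given explicitly as follows: for any subset I_b ⊆ I of size n with {t_i : i ∈ I_b} linearly independent, letting T_b and Q_b be the n×n matrices whose columns are t_i and q_i for i ∈ I_b respectively, one has D = Q_b T_b^{−1}, and this matrix does not depend on the choice of the subset I_b. -/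
/-! The hypothesis, restricted to pairs of basis indices, says `Tᵀ * Q = Qᵀ * T`; multiplying by
`(Tᵀ)⁻¹` and `T⁻¹` gives symmetry of `D = Q * T⁻¹`. Applied to a basis index and an arbitrary
index `i` it says `Tᵀ q i = Qᵀ t i`, so `q i = Dᵀ t i = D t i`. Any matrix sending each `t i` to
`q i` satisfies `D * T = Q`, which gives uniqueness, and uniqueness gives independence of the
chosen basis. -/

open Matrix

lemma isUnit_det_of_columns {n : ℕ} (v : Fin n → (Fin n → ℝ)) (hv : LinearIndependent ℝ v) :
    IsUnit (Matrix.of fun r k => v k r).det := by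
  rw [← Matrix.isUnit_iff_isUnit_det, ← Matrix.linearIndependent_cols_iff_isUnit]
  exact hv

lemma isSymm_mul_inv {n : ℕ} {T Q : Matrix (Fin n) (Fin n) ℝ} (hT : IsUnit T.det)
    (h : Tᵀ * Q = Qᵀ * T) : (Q * T⁻¹).IsSymm := by
  have hT' : IsUnit Tᵀ.det := by rwa [Matrix.det_transpose]
  calc (Q * T⁻¹)ᵀ = (Tᵀ)⁻¹ * Qᵀ := by
        rw [Matrix.transpose_mul, Matrix.transpose_nonsing_inv]
    _ = (Tᵀ)⁻¹ * (Qᵀ * T) * T⁻¹ := by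
        rw [← Matrix.mul_assoc, Matrix.mul_nonsing_inv_cancel_right _ _ hT]
    _ = Q * T⁻¹ := by rw [← h, Matrix.nonsing_inv_mul_cancel_left _ _ hT']

lemma eq_mulVec_of_isSymm {n : ℕ} {T Q : Matrix (Fin n) (Fin n) ℝ} (hT : IsUnit T.det)
    (hD : (Q * T⁻¹).IsSymm) {x y : Fin n → ℝ} (h : Tᵀ *ᵥ y = Qᵀ *ᵥ x) :
    y = (Q * T⁻¹) *ᵥ x := by
  have hT' : IsUnit Tᵀ.det := by rwa [Matrix.det_transpose]
  rw [← hD.eq, Matrix.transpose_mul, Matrix.transpose_nonsing_inv, ← Matrix.mulVec_mulVec, ← h,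
    Matrix.mulVec_mulVec, Matrix.nonsing_inv_mul _ hT', Matrix.one_mulVec]

/-- `D` is determined by its values on the basis vectors `t (e k)`, which say `D * T = Q`. -/
lemma eq_mul_inv_of_mulVec {n : ℕ} {I : Type*} {t q : I → (Fin n → ℝ)} (e : Fin n ↪ I)
    (he : LinearIndependent ℝ (fun k => t (e k))) (D : Matrix (Fin n) (Fin n) ℝ)
    (hD : ∀ i : I, q i = D.mulVec (t i)) :
    D = (Matrix.of fun r k => q (e k) r) * (Matrix.of fun r k => t (e k) r)⁻¹ := by
  have hQ : (Matrix.of fun r k => q (e k) r) = D * (Matrix.of fun r k => t (e k) r) := by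
    ext r k
    exact congrFun (hD (e k)) r
  rw [hQ, Matrix.mul_nonsing_inv_cancel_right _ _ (isUnit_det_of_columns _ he)]

/-- The explicit form of the matrix `D` in Lemma `qt` of Deza–Grishukhin: if the
`t i` span `ℝⁿ` and `q i ⬝ᵥ t j = t i ⬝ᵥ q j` for all `i, j`, then for any choice of
`n` indices (an embedding `e : Fin n ↪ I`) with `t ∘ e` linearly independent, letting
`T_b` and `Q_b` be the matrices with columns `t (e k)`, resp. `q (e k)`, the matrix
`Q_b * T_b⁻¹` is symmetric, satisfies `q i = (Q_b * T_b⁻¹) t i` for all `i`, is the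
unique symmetric matrix with this property, and does not depend on the choice of the
embedding `e`. -/
theorem stmt_14 (n : ℕ) (hn : 1 ≤ n) (I : Type*) [Fintype I]
    (t q : I → (Fin n → ℝ))
    (ht : Submodule.span ℝ (Set.range t) = ⊤)
    (hsym : ∀ i j : I, q i ⬝ᵥ t j = t i ⬝ᵥ q j) :
    (∀ e : Fin n ↪ I, LinearIndependent ℝ (fun k => t (e k)) →
      ((Matrix.of fun r k => q (e k) r) * (Matrix.of fun r k => t (e k) r)⁻¹).IsSymm ∧
      (∀ i : I, q i =
        ((Matrix.of fun r k => q (e k) r) * (Matrix.of fun r k => t (e k) r)⁻¹).mulVec (t i)) ∧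
      (∀ D : Matrix (Fin n) (Fin n) ℝ, D.IsSymm → (∀ i : I, q i = D.mulVec (t i)) →
        D = (Matrix.of fun r k => q (e k) r) * (Matrix.of fun r k => t (e k) r)⁻¹)) ∧
    (∀ e e' : Fin n ↪ I, LinearIndependent ℝ (fun k => t (e k)) →
      LinearIndependent ℝ (fun k => t (e' k)) →
      (Matrix.of fun r k => q (e k) r) * (Matrix.of fun r k => t (e k) r)⁻¹ =
        (Matrix.of fun r k => q (e' k) r) * (Matrix.of fun r k => t (e' k) r)⁻¹) := by
  have key : ∀ e : Fin n ↪ I, LinearIndependent ℝ (fun k => t (e k)) →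
      ((Matrix.of fun r k => q (e k) r) * (Matrix.of fun r k => t (e k) r)⁻¹).IsSymm ∧
      (∀ i : I, q i =
        ((Matrix.of fun r k => q (e k) r) *
          (Matrix.of fun r k => t (e k) r)⁻¹).mulVec (t i)) := by
    intro e he
    have hT := isUnit_det_of_columns _ he
    have hS := isSymm_mul_inv (Q := Matrix.of fun r k => q (e k) r) hT (by
      ext k l
      exact (hsym (e k) (e l)).symm)
    refine ⟨hS, fun i => eq_mulVec_of_isSymm hT hS ?_⟩
    ext k
    exact (hsym (e k) i).symm
  refine ⟨fun e he => ⟨(key e he).1, (key e he).2, fun D _ hD => eq_mul_inv_of_mulVec e he D hD⟩,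
    fun e e' he he' => eq_mul_inv_of_mulVec e' he' _ (key e he).2⟩
end
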